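/- arXiv:2109.12616 — 3 statements merged into one kernel-verified Lean document; each statement's English description precedes it below -/
import Mathlib

section
/- Suppose vote : Fin n → Option Bool satisfies the round-1 justification condition: for every replica i and every b : Bool, vote i = some b implies |{j ∈ R i : state j = b}| ≥ ⌊n/2⌋ + 1. Then all non-? votes agree: for all replicas i and i' and booleans b and b', if vote i = some b and vote i' = some b', then b = b'. (In any phase of Weak-MVC there is at most one non-? value among all votes.) -/
theorem eq_of_card_lt_card_filter_add_card_filter {ι α : Type*} [DecidableEq α]
    {f : ι → α} {s t u : Finset ι} {a b : α} (hs : s ⊆ u) (ht : t ⊆ u)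
    (h : u.card < (s.filter (f · = a)).card + (t.filter (f · = b)).card) : a = b := by
  classical
  obtain ⟨j, hj⟩ := Finset.inter_nonempty_of_card_lt_card_add_card
    ((Finset.filter_subset _ s).trans hs) ((Finset.filter_subset _ t).trans ht) h
  obtain ⟨hja, hjb⟩ := Finset.mem_inter.mp hj
  exact (Finset.mem_filter.mp hja).2.symm.trans (Finset.mem_filter.mp hjb).2

theorem votes_agree_general {ι κ α : Type*} [Fintype ι] [DecidableEq α]
    {state : ι → α} {R : κ → Finset ι} {vote : κ → Option α} {q : ℕ}
    (hq : Fintype.card ι < 2 * q)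
    (hjust : ∀ i b, vote i = some b → q ≤ ((R i).filter (state · = b)).card)
    (i i' : κ) (b b' : α) (hb : vote i = some b) (hb' : vote i' = some b') : b = b' := by
  refine eq_of_card_lt_card_filter_add_card_filter (f := state)
    (Finset.subset_univ (R i)) (Finset.subset_univ (R i')) ?_
  calc
    Finset.univ.card < q + q := by rwa [Finset.card_univ, ← two_mul]
    _ ≤ _ := add_le_add (hjust i b hb) (hjust i' b' hb')

theorem votes_agree
    (n : ℕ) (state : Fin n → Bool) (R : Fin n → Finset (Fin n))
    (vote : Fin n → Option Bool)
    (hjust : ∀ i : Fin n, ∀ b : Bool, vote i = some b →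
      ((R i).filter (fun j => state j = b)).card ≥ n / 2 + 1) :
    ∀ i i' : Fin n, ∀ b b' : Bool,
      vote i = some b → vote i' = some b' → b = b' :=
  votes_agree_general (by rw [Fintype.card_fin]; omega) hjust
end

section
/- (Invariant 2 of the safety proof: once a replica decides on a value b, the next phase is value-locked on b.) Suppose vote : Fin n → Option Bool satisfies the round-1 justification condition: for every replica j and every c : Bool, vote j = some c implies |{k ∈ R j : state k = c}| ≥ ⌊n/2⌋ + 1. If some replica i decides b (that is, |{j ∈ R' i : vote j = some b}| ≥ f + 1), then: (a) at least f + 1 replicas j ∈ Fin n have vote j = some b; (b) every replica i' receives at least one vote equal to some b, i.e., there exists j ∈ R' i' with vote j = some b; and (c) every non-none vote equals some b, i.e., for all j and b', vote j = some b' implies b' = b. Consequently every replica that does not decide in this phase sets its next-phase state to b. -/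
/-! Both halves are quorum intersections. The `f + 1` votes for the decided value meet every set of
`n - f` received votes; and two majorities share a replica, whose single state is the value behind
both, so any two justified votes agree. -/

section QuorumIntersection

open Finset

variable {ι κ α : Type*} [Fintype ι]

theorem exists_mem_mem_of_card_lt_card_add_card {s t : Finset ι}
    (h : Fintype.card ι < #s + #t) : ∃ i ∈ s, i ∈ t := by
  classical
  simpa only [Finset.Nonempty, mem_inter] using
    inter_nonempty_of_card_lt_card_add_card (subset_univ s) (subset_univ t) h

theorem eq_of_majority_of_majority [DecidableEq α] {state : ι → α} {s t : Finset ι} {b c : α}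
    (hb : Fintype.card ι / 2 < #{k ∈ s | state k = b})
    (hc : Fintype.card ι / 2 < #{k ∈ t | state k = c}) : b = c := by
  have hcard : Fintype.card ι < #{k ∈ s | state k = b} + #{k ∈ t | state k = c} := by omega
  obtain ⟨k, hkb, hkc⟩ := exists_mem_mem_of_card_lt_card_add_card hcard
  exact (mem_filter.mp hkb).2.symm.trans (mem_filter.mp hkc).2

theorem vote_eq_vote_of_justified [DecidableEq α] {state : ι → α} {R : κ → Finset ι}
    {vote : κ → Option α}
    (hjust : ∀ j c, vote j = some c → Fintype.card ι / 2 < #{k ∈ R j | state k = c})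
    {j k : κ} {b c : α} (hj : vote j = some b) (hk : vote k = some c) : b = c :=
  eq_of_majority_of_majority (hjust j b hj) (hjust k c hk)

theorem decision_value_locks_next_phase_general [DecidableEq α] {f : ℕ} {state : ι → α}
    {R R' : ι → Finset ι} {vote : ι → Option α}
    (hR' : ∀ i, Fintype.card ι - f ≤ #(R' i))
    (hjust : ∀ j c, vote j = some c → Fintype.card ι / 2 < #{k ∈ R j | state k = c})
    {i : ι} {b : α} (hdec : f < #{j ∈ R' i | vote j = some b}) :
    f < #{j | vote j = some b} ∧ (∀ i', ∃ j ∈ R' i', vote j = some b) ∧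
      ∀ j b', vote j = some b' → b' = b := by
  have hvotes : f < #{j | vote j = some b} :=
    hdec.trans_le (card_le_card (filter_subset_filter _ (subset_univ _)))
  have hreceived (i' : ι) : ∃ j ∈ R' i', vote j = some b := by
    have hcard : Fintype.card ι < #(R' i') + #{j | vote j = some b} := by
      have := hR' i'
      omega
    simpa only [mem_filter_univ] using exists_mem_mem_of_card_lt_card_add_card hcard
  obtain ⟨k, -, hk⟩ := hreceived i
  exact ⟨hvotes, hreceived, fun _ _ hj => vote_eq_vote_of_justified hjust hj hk⟩

end QuorumIntersection

theorem decision_value_locks_next_phase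
    (n f : ℕ) (state : Fin n → Bool)
    (R R' : Fin n → Finset (Fin n))
    (vote : Fin n → Option Bool)
    (hR' : ∀ i : Fin n, (R' i).card ≥ n - f)
    (hjust : ∀ j : Fin n, ∀ c : Bool, vote j = some c →
      ((R j).filter (fun k => state k = c)).card ≥ n / 2 + 1)
    (i : Fin n) (b : Bool)
    (hdec : ((R' i).filter (fun j => vote j = some b)).card ≥ f + 1) :
    ((Finset.univ.filter (fun j : Fin n => vote j = some b)).card ≥ f + 1)
    ∧ (∀ i' : Fin n, ∃ j ∈ R' i', vote j = some b)
    ∧ (∀ j : Fin n, ∀ b' : Bool, vote j = some b' → b' = b) :=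
  decision_value_locks_next_phase_general (by rwa [Fintype.card_fin])
    (by rwa [Fintype.card_fin]) hdec
end

section
/- (Theorem: Weak-MVC has average round complexity at most 5.) The expected number of communication rounds satisfies E[2·T + 1] = ∫ (2 · T ω + 1) dμ(ω) ≤ 5. -/
open MeasureTheory ENNReal

theorem tsum_indicator_Iio_one {R : Type*} [AddCommMonoidWithOne R] [TopologicalSpace R] (n : ℕ) :
    ∑' t, (Set.Iio n).indicator (1 : ℕ → R) t = n := by
  simpa using (sum_eq_tsum_indicator (1 : ℕ → R) (Finset.range n)).symm

section TailSum

variable {Ω : Type*} [MeasurableSpace Ω] {μ : Measure Ω} {T : Ω → ℕ}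

theorem lintegral_natCast_eq_tsum_measure_lt (hT : AEMeasurable T μ) :
    ∫⁻ ω, (T ω : ℝ≥0∞) ∂μ = ∑' t, μ {ω | t < T ω} := by
  have hmeas (t : ℕ) : NullMeasurableSet {ω | t < T ω} μ :=
    hT.nullMeasurableSet_preimage measurableSet_Ioi
  calc ∫⁻ ω, (T ω : ℝ≥0∞) ∂μ
      = ∫⁻ ω, ∑' t, {ω | t < T ω}.indicator 1 ω ∂μ :=
        lintegral_congr fun ω ↦ (tsum_indicator_Iio_one (T ω)).symm
    _ = ∑' t, ∫⁻ ω, {ω | t < T ω}.indicator 1 ω ∂μ :=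
        lintegral_tsum fun t ↦ aemeasurable_one.indicator₀ (hmeas t)
    _ = ∑' t, μ {ω | t < T ω} := tsum_congr fun t ↦ lintegral_indicator_one₀ (hmeas t)

theorem lintegral_natCast_le_of_measure_lt_le_geometric (hT : AEMeasurable T μ) {C r : ℝ≥0∞}
    (htail : ∀ t, μ {ω | t < T ω} ≤ C * r ^ t) :
    ∫⁻ ω, (T ω : ℝ≥0∞) ∂μ ≤ C * (1 - r)⁻¹ :=
  calc ∫⁻ ω, (T ω : ℝ≥0∞) ∂μ
      = ∑' t, μ {ω | t < T ω} := lintegral_natCast_eq_tsum_measure_lt hT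
    _ ≤ ∑' t, C * r ^ t := ENNReal.tsum_le_tsum htail
    _ = C * (1 - r)⁻¹ := by rw [ENNReal.tsum_mul_left, ENNReal.tsum_geometric]

end TailSum

theorem weakmvc_average_round_complexity
    {Ω : Type*} [MeasurableSpace Ω] (μ : Measure Ω) [IsProbabilityMeasure μ]
    (T : Ω → ℕ) (hT : Measurable T)
    (htail : ∀ t : ℕ, μ {ω | T ω > t} ≤ (1 / 2) ^ t) :
    ∫⁻ ω, (2 * (T ω : ℝ≥0∞) + 1) ∂μ ≤ 5 := by
  have expected_phases_le_two : ∫⁻ ω, (T ω : ℝ≥0∞) ∂μ ≤ 2 :=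
    calc ∫⁻ ω, (T ω : ℝ≥0∞) ∂μ
        ≤ 1 * (1 - 1 / 2)⁻¹ :=
          lintegral_natCast_le_of_measure_lt_le_geometric hT.aemeasurable
            fun t ↦ (htail t).trans_eq (one_mul _).symm
      _ = 2 := by rw [one_mul, one_div, one_sub_inv_two, inv_inv]
  calc ∫⁻ ω, (2 * (T ω : ℝ≥0∞) + 1) ∂μ
      = 2 * ∫⁻ ω, (T ω : ℝ≥0∞) ∂μ + 1 := by
        rw [lintegral_add_right _ measurable_const, lintegral_const_mul' _ _ ofNat_ne_top,
          lintegral_const, measure_univ, one_mul]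
    _ ≤ 2 * 2 + 1 := by gcongr
    _ = 5 := by norm_num
end
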